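/- There exists a sequence (g_n)_{n≥0} of rational numbers such that for every c > 0 and every β ∈ (0, π) there exist L, M > 0 with: for every z ∈ ℂ with |z| > c and |arg z| < β, and every N ∈ ℕ, |(2π)^{−1/2}·exp((1/2 − z)·Log z + z)·Γ(z) − 1 − Σ_{n=0}^{N−1} g_n z^{−n−1}| ≤ L·M^N·N!·|z|^{−N−1}. (Log and arg denote the principal branch of the logarithm and of the argument, and Γ is the complex Gamma function.) -/

import Mathlib

/-!
Integrating by parts against the Bernoulli polynomials on the segments `[z + k, z + k + 1]` expands
Binet's function, the logarithm of the normalized Gamma function, into its Stirling series with an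
explicit integral remainder. As `‖z + s‖ ≥ cos (arg z / 2) * (‖z‖ + s)` for `0 ≤ s` and
`|B_n| ≤ n!` on `[0, 1]`, this remainder satisfies 1-Gevrey estimates which are uniform on every
sector `‖z‖ > c`, `|arg z| < β` with `β < π`. These estimates survive products, at the cost of a
factor `3` in the constant `L` only, hence exponentials: the factor becomes `3 ^ k` in the term of
degree `k` of the exponential series, which still converges. Finally, the exponential of Binet's
function is the normalized Gamma function, since both satisfy the same functional equation under
`z ↦ z + 1` and tend to `1` along `z + K`, `K → ∞`.
-/

section Gevrey

open Finset PowerSeries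
open scoped Nat

/-- The 1-Gevrey estimates, with constants `L` and `M`, for a power series `A` as an expansion in
powers of `w` of the value `f`. A function has `A` as uniform 1-Gevrey asymptotic expansion in
powers of `w` on a set if these estimates hold at all points of the set with the same `L` and `M`.
The bound on the coefficients, which in that situation follows from the bound on the remainders
when `w` takes arbitrarily small nonzero values, is included so that the estimates at a single
point are stable under products. -/
structure HasGevreyExpansionAt {R : Type*} [NormedCommRing R] (A : R⟦X⟧) (f w : R) (L M : ℝ) :
    Prop where
  norm_coeff_le (N : ℕ) : ‖coeff N A‖ ≤ L * M ^ N * (N ! : ℝ)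
  norm_sub_sum_le (N : ℕ) : ‖f - ∑ n ∈ range N, coeff n A * w ^ n‖ ≤ L * M ^ N * N ! * ‖w‖ ^ N

theorem factorial_succ_mul_factorial_succ_le (a b : ℕ) :
    (a + 1)! * (b + 1)! ≤ (a + b + 1)! := by
  have hb : (1 + 1).ascFactorial b = (b + 1)! := by
    simpa [add_comm] using Nat.factorial_mul_ascFactorial 1 b
  rw [← hb, add_right_comm, ← Nat.factorial_mul_ascFactorial (a + 1) b]
  exact Nat.mul_le_mul_left _ (Nat.ascFactorial_le b (by lia))

theorem sum_antidiagonal_factorial_mul_factorial_le (N : ℕ) :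
    ∑ ij ∈ antidiagonal N, ij.1 ! * ij.2 ! ≤ 3 * N ! := by
  rcases N with _ | _ | N
  · simp
  · decide
  have hinner : ∑ ij ∈ antidiagonal N, (ij.1 + 1)! * (ij.2 + 1)! ≤ (N + 1) * (N + 1)! := by
    refine (sum_le_card_nsmul _ _ (N + 1)! fun ij hij => ?_).trans_eq (by simp)
    rw [← mem_antidiagonal.1 hij]
    exact factorial_succ_mul_factorial_succ_le ij.1 ij.2
  rw [Finset.Nat.antidiagonal_succ_succ']
  simp only [sum_cons, sum_map, Function.Embedding.prodMap, Function.Embedding.coeFn_mk,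
    Prod.map_fst, Prod.map_snd, Nat.succ_eq_add_one, Nat.factorial_zero]
  rw [Nat.factorial_succ (N + 1)]
  lia

theorem sum_range_coeff_mul_mul_pow {R : Type*} [CommRing R] (A B : R⟦X⟧) (w : R) (N : ℕ) :
    ∑ n ∈ range N, coeff n (A * B) * w ^ n =
      ∑ n ∈ range N, coeff n B * w ^ n * ∑ i ∈ range (N - n), coeff i A * w ^ i := by
  simp only [mul_sum]
  rw [← sum_range_diag_flip N fun n i => coeff n B * w ^ n * (coeff i A * w ^ i)]
  refine sum_congr rfl fun n _ => ?_
  rw [mul_comm A B, coeff_mul, Nat.sum_antidiagonal_eq_sum_range_succ_mk, sum_mul]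
  refine sum_congr rfl fun k hk => ?_
  rw [← Nat.add_sub_of_le (mem_range_succ_iff.1 hk), pow_add, Nat.add_sub_cancel_left]
  ring

theorem hasSum_coeff_subst {R : Type*} [CommRing R] [TopologicalSpace R] {A : R⟦X⟧}
    (hA : HasSubst A) (F : R⟦X⟧) (n : ℕ) :
    HasSum (fun k => coeff k F * coeff n (A ^ k)) (coeff n (F.subst A)) := by
  have hfin := coeff_subst_finite' hA F n
  rw [coeff_subst' hA, finsum_eq_sum _ hfin]
  exact hasSum_sum_of_ne_finset_zero fun k hk => by simpa using hk

theorem coeff_zero_subst {R : Type*} [CommRing R] {A : R⟦X⟧} (hA : constantCoeff A = 0)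
    (F : R⟦X⟧) : coeff 0 (F.subst A) = coeff 0 F := by
  rw [coeff_subst' (.of_constantCoeff_zero' hA), finsum_eq_single _ 0 fun k hk => by simp [hA, hk]]
  simp

namespace HasGevreyExpansionAt

variable {R : Type*} [NormedCommRing R] {A B : R⟦X⟧} {f g w : R} {L L' M M' : ℝ}

theorem nonneg (hf : HasGevreyExpansionAt A f w L M) : 0 ≤ L := by
  simpa using (norm_nonneg _).trans (hf.norm_coeff_le 0)

theorem norm_le (hf : HasGevreyExpansionAt A f w L M) : ‖f‖ ≤ L := by
  simpa using hf.norm_sub_sum_le 0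

theorem mono (hf : HasGevreyExpansionAt A f w L M) (hL : L ≤ L') (hM : 0 ≤ M) (hMM' : M ≤ M') :
    HasGevreyExpansionAt A f w L' M' := by
  have hL' : 0 ≤ L' := hf.nonneg.trans hL
  exact ⟨fun N => (hf.norm_coeff_le N).trans (by gcongr),
    fun N => (hf.norm_sub_sum_le N).trans (by gcongr)⟩

theorem norm_sub_sub_sum_succ_le (hf : HasGevreyExpansionAt A f w L M) (hM : 0 ≤ M) (N : ℕ) :
    ‖f - coeff 0 A - ∑ n ∈ range N, coeff (n + 1) A * w ^ (n + 1)‖ ≤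
      L * M * (2 * M) ^ N * N ! * ‖w‖ ^ (N + 1) := by
  have hL := hf.nonneg
  have hfactorial : ((N + 1)! : ℝ) ≤ 2 ^ N * N ! := by
    exact_mod_cast Nat.mul_le_mul_right (N !) N.lt_two_pow_self
  have h := hf.norm_sub_sum_le (N + 1)
  rw [sum_range_succ', pow_zero, mul_one, add_comm, ← sub_sub] at h
  calc _ ≤ L * M ^ (N + 1) * (N + 1)! * ‖w‖ ^ (N + 1) := h
    _ ≤ L * M ^ (N + 1) * (2 ^ N * N !) * ‖w‖ ^ (N + 1) := by gcongr
    _ = _ := by ring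

theorem norm_coeff_mul_le (hM : 0 ≤ M) (hf : HasGevreyExpansionAt A f w L M)
    (hg : HasGevreyExpansionAt B g w L' M) (N : ℕ) :
    ‖coeff N (A * B)‖ ≤ 3 * L * L' * M ^ N * N ! := by
  have hL := hf.nonneg
  have hL' := hg.nonneg
  have hterm : ∀ ij ∈ antidiagonal N,
      ‖coeff ij.1 A * coeff ij.2 B‖ ≤ L * L' * M ^ N * (ij.1 ! * ij.2 ! : ℕ) := fun ij hij => by
    calc _ ≤ (L * M ^ ij.1 * ij.1 !) * (L' * M ^ ij.2 * ij.2 !) :=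
          norm_mul_le_of_le (hf.norm_coeff_le _) (hg.norm_coeff_le _)
      _ = _ := by rw [← mem_antidiagonal.1 hij, pow_add, Nat.cast_mul]; ring
  rw [coeff_mul]
  calc _ ≤ ∑ ij ∈ antidiagonal N, L * L' * M ^ N * (ij.1 ! * ij.2 ! : ℕ) :=
        norm_sum_le_of_le _ hterm
    _ = L * L' * M ^ N * (∑ ij ∈ antidiagonal N, ij.1 ! * ij.2 ! : ℕ) := by
        rw [← mul_sum, ← Nat.cast_sum]
    _ ≤ L * L' * M ^ N * (3 * N ! : ℕ) := by
        gcongr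
        exact sum_antidiagonal_factorial_mul_factorial_le N
    _ = _ := by push_cast; ring

variable [NormOneClass R]

theorem norm_mul_sub_sum_le (hM : 0 ≤ M) (hf : HasGevreyExpansionAt A f w L M)
    (hg : HasGevreyExpansionAt B g w L' M) (N : ℕ) :
    ‖f * g - ∑ n ∈ range N, coeff n (A * B) * w ^ n‖ ≤ 3 * L * L' * M ^ N * N ! * ‖w‖ ^ N := by
  have hL := hf.nonneg
  have hL' := hg.nonneg
  have hsplit : f * g - ∑ n ∈ range N, coeff n (A * B) * w ^ n =
      ∑ n ∈ range N, coeff n B * w ^ n * (f - ∑ i ∈ range (N - n), coeff i A * w ^ i) +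
        f * (g - ∑ n ∈ range N, coeff n B * w ^ n) := by
    simp only [sum_range_coeff_mul_mul_pow, mul_sub, sum_sub_distrib, ← sum_mul]
    ring
  have hterm : ∀ n ∈ range N,
      ‖coeff n B * w ^ n * (f - ∑ i ∈ range (N - n), coeff i A * w ^ i)‖ ≤
        L * L' * M ^ N * ‖w‖ ^ N * (n ! * (N - n)! : ℕ) := fun n hn => by
    calc _ ≤ (L' * M ^ n * n !) * ‖w‖ ^ n *
          (L * M ^ (N - n) * (N - n)! * ‖w‖ ^ (N - n)) :=
          norm_mul_le_of_le (norm_mul_le_of_le (hg.norm_coeff_le n) (norm_pow_le w n))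
            (hf.norm_sub_sum_le _)
      _ = L * L' * (M ^ n * M ^ (N - n)) * (‖w‖ ^ n * ‖w‖ ^ (N - n)) * (n ! * (N - n)! : ℕ) := by
          push_cast; ring
      _ = _ := by simp only [pow_mul_pow_sub _ (mem_range.1 hn).le]
  have hlast : ‖f * (g - ∑ n ∈ range N, coeff n B * w ^ n)‖ ≤
      L * L' * M ^ N * ‖w‖ ^ N * (N ! * (N - N)! : ℕ) := by
    refine (norm_mul_le_of_le hf.norm_le (hg.norm_sub_sum_le N)).trans_eq ?_
    rw [Nat.sub_self, Nat.factorial_zero, mul_one]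
    ring
  rw [hsplit]
  calc _ ≤ ∑ n ∈ range N, L * L' * M ^ N * ‖w‖ ^ N * (n ! * (N - n)! : ℕ) +
        L * L' * M ^ N * ‖w‖ ^ N * (N ! * (N - N)! : ℕ) :=
        norm_add_le_of_le (norm_sum_le_of_le _ hterm) hlast
    _ = L * L' * M ^ N * ‖w‖ ^ N * (∑ ij ∈ antidiagonal N, ij.1 ! * ij.2 ! : ℕ) := by
        rw [← sum_range_succ, ← mul_sum, ← Nat.cast_sum,
          Nat.sum_antidiagonal_eq_sum_range_succ fun i j => i ! * j !]
    _ ≤ L * L' * M ^ N * ‖w‖ ^ N * (3 * N ! : ℕ) := by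
        gcongr
        exact sum_antidiagonal_factorial_mul_factorial_le N
    _ = _ := by push_cast; ring

theorem mul (hM : 0 ≤ M) (hf : HasGevreyExpansionAt A f w L M)
    (hg : HasGevreyExpansionAt B g w L' M) :
    HasGevreyExpansionAt (A * B) (f * g) w (3 * L * L') M :=
  ⟨norm_coeff_mul_le hM hf hg, norm_mul_sub_sum_le hM hf hg⟩

theorem one (w : R) (hM : 0 ≤ M) : HasGevreyExpansionAt 1 1 w 1 M where
  norm_coeff_le N := by
    rw [coeff_one]
    split_ifs with hN
    · simp [hN]
    · simpa using by positivity
  norm_sub_sum_le N := by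
    rcases N with _ | N
    · simp
    · simpa [coeff_one, sum_range_succ'] using by positivity

theorem pow (hM : 0 ≤ M) (hf : HasGevreyExpansionAt A f w L M) (k : ℕ) :
    HasGevreyExpansionAt (A ^ k) (f ^ k) w ((3 * L) ^ k) M := by
  induction k with
  | zero => simpa using one w hM
  | succ k ih =>
    rw [pow_succ A, pow_succ f, show (3 * L) ^ (k + 1) = 3 * (3 * L) ^ k * L by ring]
    exact ih.mul hM hf

theorem subst (hA : constantCoeff A = 0) (hM : 0 ≤ M) (hf : HasGevreyExpansionAt A f w L M)
    {F : R⟦X⟧} {y : R} {S : ℝ} (hy : HasSum (fun k => coeff k F * f ^ k) y)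
    (hS : HasSum (fun k => ‖coeff k F‖ * (3 * L) ^ k) S) :
    HasGevreyExpansionAt (F.subst A) y w S M := by
  have hcoeff := hasSum_coeff_subst (HasSubst.of_constantCoeff_zero' hA) F
  refine ⟨fun N => ?_, fun N => ?_⟩
  · rw [mul_assoc]
    refine (hcoeff N).norm_le_of_bounded (hS.mul_right _) fun k => ?_
    rw [mul_assoc, ← mul_assoc (_ ^ k)]
    exact norm_mul_le_of_le le_rfl ((hf.pow hM k).norm_coeff_le N)
  · have hsum : HasSum (fun k => coeff k F * (f ^ k - ∑ n ∈ range N, coeff n (A ^ k) * w ^ n))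
        (y - ∑ n ∈ range N, coeff n (F.subst A) * w ^ n) := by
      simpa only [mul_sub, mul_sum, mul_assoc] using
        hy.sub (hasSum_sum fun n _ => (hcoeff n).mul_right (w ^ n))
    rw [mul_assoc S, mul_assoc S]
    refine hsum.norm_le_of_bounded (hS.mul_right _) fun k => ?_
    rw [mul_assoc, ← mul_assoc (_ ^ k), ← mul_assoc (_ ^ k)]
    exact norm_mul_le_of_le le_rfl ((hf.pow hM k).norm_sub_sum_le N)

theorem exp {𝕜 : Type*} [RCLike 𝕜] {A : 𝕜⟦X⟧} {f w : 𝕜} (hA : constantCoeff A = 0) (hM : 0 ≤ M)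
    (hf : HasGevreyExpansionAt A f w L M) :
    HasGevreyExpansionAt ((PowerSeries.exp 𝕜).subst A) (NormedSpace.exp f) w
      (Real.exp (3 * L)) M := by
  refine hf.subst hA hM ?_ ?_
  · simpa [div_eq_inv_mul] using NormedSpace.expSeries_div_hasSum_exp f
  · rw [Real.exp_eq_exp_ℝ]
    simpa [div_eq_inv_mul] using NormedSpace.expSeries_div_hasSum_exp (3 * L)

end HasGevreyExpansionAt

end Gevrey

section EulerMaclaurin

open Set intervalIntegral
open scoped Nat

theorem abs_bernoulliFun_le_factorial (n : ℕ) {x : ℝ} (hx : x ∈ Icc (0 : ℝ) 1) :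
    |bernoulliFun n x| ≤ n ! := by
  induction n generalizing x with
  | zero => simp
  | succ n ih =>
    have hderiv : ∀ t ∈ Icc (0 : ℝ) 1, ‖((n + 1 : ℕ) : ℝ) * bernoulliFun n t‖ ≤ (n + 1)! :=
      fun t ht => by
        rw [norm_mul, Real.norm_natCast, Nat.factorial_succ, Nat.cast_mul]
        exact mul_le_mul_of_nonneg_left (ih ht) (by positivity)
    have hlip : ∀ y ∈ Icc (0 : ℝ) 1,
        ‖bernoulliFun (n + 1) x - bernoulliFun (n + 1) y‖ ≤ (n + 1)! := fun y hy =>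
      ((convex_Icc (0 : ℝ) 1).norm_image_sub_le_of_norm_hasDerivWithin_le
        (fun t _ => (hasDerivAt_bernoulliFun (n + 1) t).hasDerivWithinAt) hderiv hy hx).trans
        (mul_le_of_le_one_right (by positivity)
          (by simpa using abs_sub_le_of_le_of_le hx.1 hx.2 hy.1 hy.2))
    have hmean : ∫ y in (0 : ℝ)..1, (bernoulliFun (n + 1) x - bernoulliFun (n + 1) y) =
        bernoulliFun (n + 1) x := by
      rw [integral_sub (by simp) (intervalIntegrable_bernoulliFun _ _ _),
        integral_bernoulliFun_eq_zero n.succ_ne_zero]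
      simp
    rw [← hmean, ← Real.norm_eq_abs]
    refine (norm_integral_le_of_norm_le_const fun y hy => hlip y ?_).trans (by simp)
    rw [uIoc_of_le zero_le_one] at hy
    exact Ioc_subset_Icc_self hy

/-- The coefficient `B_{n+1} / (n (n + 1))` of `z⁻¹ ^ n` in the Stirling series; it vanishes at
`n = 0` because of the division by zero. -/
def stirlingCoeff (n : ℕ) : ℚ := bernoulli (n + 1) / (n * (n + 1))

theorem abs_stirlingCoeff_le (n : ℕ) : |(stirlingCoeff n : ℝ)| ≤ n ! := by
  rcases eq_or_ne n 0 with rfl | hn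
  · simp [stirlingCoeff]
  have hbernoulli : |(bernoulli (n + 1) : ℝ)| ≤ (n + 1)! := by
    simpa [bernoulliFun_eval_zero] using
      abs_bernoulliFun_le_factorial (n + 1) (left_mem_Icc.2 zero_le_one)
  have hn1 : (1 : ℝ) ≤ n := by exact_mod_cast Nat.one_le_iff_ne_zero.2 hn
  rw [stirlingCoeff]
  push_cast
  rw [abs_div, abs_of_pos (by positivity : (0 : ℝ) < n * (n + 1)), div_le_iff₀ (by positivity)]
  calc _ ≤ ((n + 1)! : ℝ) := hbernoulli
    _ = n ! * (1 * (n + 1)) := by rw [Nat.factorial_succ]; push_cast; ring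
    _ ≤ _ := by gcongr

/-- The Stirling series `∑ B_{n+1} / (n (n + 1)) X ^ n`, the formal expansion in powers of
`X = z⁻¹` of the logarithm of the normalized Gamma function. -/
def stirlingSeries : PowerSeries ℚ := PowerSeries.mk stirlingCoeff

theorem constantCoeff_stirlingSeries : PowerSeries.constantCoeff stirlingSeries = 0 := by
  simp [← PowerSeries.coeff_zero_eq_constantCoeff_apply, stirlingSeries, stirlingCoeff]

/-- The contribution of the unit segment `[z, z + 1]` to the Euler–Maclaurin remainder of order `n`
in Stirling's formula. -/
noncomputable def stirlingSegment (n : ℕ) (z : ℂ) : ℂ :=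
  (n : ℂ)⁻¹ * ∫ t in (0 : ℝ)..1, (bernoulliFun n t : ℂ) / (z + t) ^ n

theorem add_ofReal_mem_slitPlane {z : ℂ} (hz : z ∈ Complex.slitPlane) {t : ℝ} (ht : 0 ≤ t) :
    z + t ∈ Complex.slitPlane := by
  simp only [Complex.mem_slitPlane_iff, Complex.add_re, Complex.ofReal_re, Complex.add_im,
    Complex.ofReal_im, add_zero] at hz ⊢
  exact hz.imp_left fun h => by linarith

theorem add_natCast_mem_slitPlane {z : ℂ} (hz : z ∈ Complex.slitPlane) (k : ℕ) :
    z + k ∈ Complex.slitPlane := by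
  simpa using add_ofReal_mem_slitPlane hz k.cast_nonneg

variable {z : ℂ}

theorem hasDerivAt_inv_add_ofReal_pow (n : ℕ) {t : ℝ} (h : z + t ≠ 0) :
    HasDerivAt (fun t : ℝ => ((z + t) ^ n)⁻¹) (-(n : ℂ) / (z + t) ^ (n + 1)) t := by
  have hadd : HasDerivAt (fun t : ℝ => z + (t : ℂ)) 1 t := by
    simpa using (Complex.ofRealCLM.hasDerivAt (x := t)).const_add z
  refine ((hadd.pow n).inv (pow_ne_zero n h)).congr_deriv ?_
  rcases n with _ | n
  · simp
  · simp only [Pi.pow_apply, Nat.add_sub_cancel]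
    field_simp
    ring

theorem stirlingSegment_eq_add_succ {n : ℕ} (hn : n ≠ 0) (hz : z ∈ Complex.slitPlane) :
    stirlingSegment n z =
      stirlingCoeff n * (((z + 1) ^ n)⁻¹ - (z ^ n)⁻¹) + stirlingSegment (n + 1) z := by
  have hne : ∀ t ∈ uIcc (0 : ℝ) 1, z + t ≠ 0 := fun t ht =>
    Complex.slitPlane_ne_zero (add_ofReal_mem_slitPlane hz (uIcc_of_le (zero_le_one' ℝ) ▸ ht).1)
  have hn0 : (n : ℂ) ≠ 0 := Nat.cast_ne_zero.2 hn
  have hn1 : (n : ℂ) + 1 ≠ 0 := Nat.cast_add_one_ne_zero n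
  have hparts := integral_mul_deriv_eq_deriv_mul
    (fun t ht => hasDerivAt_inv_add_ofReal_pow n (hne t ht))
    (fun t _ => (antideriv_bernoulliFun n t).ofReal_comp)
    (ContinuousOn.intervalIntegrable (ContinuousOn.div (by fun_prop) (by fun_prop)
      fun t ht => pow_ne_zero _ (hne t ht)))
    ((Complex.continuous_ofReal.comp (continuous_bernoulliFun n)).intervalIntegrable _ _)
  have hderiv : ∫ t in (0 : ℝ)..1, -(n : ℂ) / (z + t) ^ (n + 1) *
      ((bernoulliFun (n + 1) t / (n + 1) : ℝ) : ℂ) =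
      -(n / (n + 1)) * ∫ t in (0 : ℝ)..1, (bernoulliFun (n + 1) t : ℂ) / (z + t) ^ (n + 1) := by
    rw [← intervalIntegral.integral_const_mul]
    refine integral_congr fun t _ => ?_
    push_cast
    ring
  rw [hderiv, bernoulliFun_endpoints_eq_of_ne_one (by lia), bernoulliFun_eval_zero] at hparts
  simp only [stirlingSegment, stirlingCoeff, div_eq_inv_mul _ ((_ : ℂ) ^ n), hparts]
  push_cast
  rw [add_zero]
  field_simp
  ring

theorem stirlingSegment_one (hz : z ∈ Complex.slitPlane) :
    stirlingSegment 1 z = 1 - (z + 1 / 2) * (Complex.log (z + 1) - Complex.log z) := by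
  have hmem : ∀ t ∈ uIcc (0 : ℝ) 1, z + t ∈ Complex.slitPlane := fun t ht =>
    add_ofReal_mem_slitPlane hz (uIcc_of_le (zero_le_one' ℝ) ▸ ht).1
  have hderiv : ∀ t ∈ uIcc (0 : ℝ) 1,
      HasDerivAt (fun t : ℝ => (t : ℂ) - (z + 1 / 2) * Complex.log (z + t))
        ((bernoulliFun 1 t : ℂ) / (z + t) ^ 1) t := fun t ht => by
    have hid : HasDerivAt (fun t : ℝ => (t : ℂ)) 1 t := Complex.ofRealCLM.hasDerivAt
    refine (hid.sub (((hid.const_add z).clog_real (hmem t ht)).const_mul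
      (z + 1 / 2))).congr_deriv ?_
    have := Complex.slitPlane_ne_zero (hmem t ht)
    rw [bernoulliFun_one]
    push_cast
    field_simp
    ring
  have hcont : ContinuousOn (fun t : ℝ => (bernoulliFun 1 t : ℂ) / (z + t) ^ 1) (uIcc 0 1) :=
    (Complex.continuous_ofReal.comp (continuous_bernoulliFun 1)).continuousOn.div (by fun_prop)
      fun t ht => pow_ne_zero _ (Complex.slitPlane_ne_zero (hmem t ht))
  rw [stirlingSegment, integral_eq_sub_of_hasDerivAt hderiv hcont.intervalIntegrable]
  simp only [Nat.cast_one, inv_one, Complex.ofReal_one, one_div, Complex.ofReal_zero, add_zero,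
    zero_sub, sub_neg_eq_add, one_mul]
  ring

theorem continuousOn_inv_const_add_sq {r : ℝ} (hr : 0 < r) :
    ContinuousOn (fun t => ((r + t) ^ 2)⁻¹) (uIcc 0 1) := by
  refine ContinuousOn.inv₀ (by fun_prop) fun t ht => ?_
  rw [uIcc_of_le zero_le_one] at ht
  have := ht.1
  positivity

theorem integral_inv_const_add_sq {r : ℝ} (hr : 0 < r) :
    ∫ t in (0 : ℝ)..1, ((r + t) ^ 2)⁻¹ = r⁻¹ - (r + 1)⁻¹ := by
  have h0 : (0 : ℝ) ∉ uIcc r (r + 1) := fun h => by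
    rw [uIcc_of_le (by linarith)] at h
    linarith [h.1]
  have hzpow := integral_zpow (n := -2) (Or.inr ⟨by simp, h0⟩)
  rw [integral_comp_add_left (fun x : ℝ => (x ^ 2)⁻¹) r, add_zero]
  simpa [zpow_neg, zpow_ofNat, show (-2 + 1 : ℝ) = -1 by norm_num, div_neg] using hzpow

theorem norm_stirlingSegment_add_two_le (n : ℕ) {δ r : ℝ} (hδ : 0 < δ) (hr : 0 < r)
    (h : ∀ t ∈ Icc (0 : ℝ) 1, δ * (r + t) ≤ ‖z + t‖) :
    ‖stirlingSegment (n + 2) z‖ ≤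
      (n + 1)! * δ⁻¹ ^ (n + 2) * r⁻¹ ^ n * (r⁻¹ - (r + 1)⁻¹) := by
  have hbound : ∀ t ∈ Ioc (0 : ℝ) 1, ‖(bernoulliFun (n + 2) t : ℂ) / (z + t) ^ (n + 2)‖ ≤
      (n + 2)! * δ⁻¹ ^ (n + 2) * r⁻¹ ^ n * ((r + t) ^ 2)⁻¹ := fun t ht => by
    have ht0 := ht.1
    calc _ ≤ ((n + 2)! : ℝ) / (δ * (r + t)) ^ (n + 2) := by
          rw [norm_div, norm_pow, Complex.norm_real, Real.norm_eq_abs]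
          gcongr
          · exact abs_bernoulliFun_le_factorial _ (Ioc_subset_Icc_self ht)
          · exact h t (Ioc_subset_Icc_self ht)
      _ = (n + 2)! * δ⁻¹ ^ (n + 2) * (r + t)⁻¹ ^ n * ((r + t) ^ 2)⁻¹ := by
          rw [div_eq_mul_inv, ← inv_pow, ← inv_pow, mul_inv]
          ring
      _ ≤ _ := by gcongr; linarith
  have hint := norm_integral_le_of_norm_le (μ := MeasureTheory.volume) zero_le_one
    (.of_forall hbound) ((continuousOn_inv_const_add_sq hr).intervalIntegrable.const_mul _)
  rw [intervalIntegral.integral_const_mul, integral_inv_const_add_sq hr] at hint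
  rw [stirlingSegment, norm_mul, norm_inv, Complex.norm_natCast]
  calc _ ≤ ((n + 2 : ℕ) : ℝ)⁻¹ *
        ((n + 2)! * δ⁻¹ ^ (n + 2) * r⁻¹ ^ n * (r⁻¹ - (r + 1)⁻¹)) := by gcongr
    _ = _ := by
      rw [Nat.factorial_succ (n + 1), Nat.cast_mul]
      field_simp

end EulerMaclaurin

section Sector

open Complex

-- Both `z` and `s` make the angle `arg z / 2` with the ray in the direction `exp (I * arg z / 2)`:
-- the left-hand side is the projection of `z + s` onto this ray.
theorem cos_half_arg_mul_norm_add_le (z : ℂ) (s : ℝ) :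
    Real.cos (arg z / 2) * (‖z‖ + s) ≤ ‖z + s‖ := by
  set θ : ℝ := arg z / 2 with hθ
  have hz : z = ‖z‖ * exp (θ * I) * exp (θ * I) := by
    rw [mul_assoc, ← exp_add, ← add_mul, ← ofReal_add, hθ, add_halves, norm_mul_exp_arg_mul_I]
  have hrot : (z + s) * exp ((-θ : ℝ) * I) = ‖z‖ * exp (θ * I) + s * exp ((-θ : ℝ) * I) := by
    have hinv : exp (θ * I) * exp ((-θ : ℝ) * I) = 1 := by
      rw [← exp_add, ← add_mul, ← ofReal_add, add_neg_cancel, ofReal_zero, zero_mul, exp_zero]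
    linear_combination exp ((-θ : ℝ) * I) * hz + ‖z‖ * exp (θ * I) * hinv
  calc Real.cos θ * (‖z‖ + s) = ((z + s) * exp ((-θ : ℝ) * I)).re := by
        rw [hrot, add_re, re_ofReal_mul, re_ofReal_mul, exp_ofReal_mul_I_re, exp_ofReal_mul_I_re,
          Real.cos_neg]
        ring
    _ ≤ ‖(z + s) * exp ((-θ : ℝ) * I)‖ := re_le_norm _
    _ = ‖z + s‖ := by rw [norm_mul, norm_exp_ofReal_mul_I, mul_one]

theorem cos_half_arg_pos {z : ℂ} (hz : z ∈ slitPlane) : 0 < Real.cos (arg z / 2) := by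
  have hle := arg_le_pi z
  have hlt := neg_pi_lt_arg z
  have hne := slitPlane_arg_ne_pi hz
  exact Real.cos_pos_of_mem_Ioo ⟨by linarith, by linarith [lt_of_le_of_ne hle hne]⟩

theorem cos_half_le_cos_half_arg {z : ℂ} {β : ℝ} (hβ : β ≤ Real.pi) (hz : |arg z| ≤ β) :
    Real.cos (β / 2) ≤ Real.cos (arg z / 2) := by
  rw [← Real.cos_abs (arg z / 2), abs_div, abs_two]
  exact Real.cos_le_cos_of_nonneg_of_le_pi (by positivity) (by linarith [Real.pi_pos]) (by linarith)

theorem mem_slitPlane_of_abs_arg_lt_pi {z : ℂ} (hz : z ≠ 0) (harg : |arg z| < Real.pi) :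
    z ∈ slitPlane :=
  mem_slitPlane_iff_arg.2 ⟨fun h => by simp [h, abs_of_pos Real.pi_pos] at harg, hz⟩

end Sector

section Binet

open Complex Filter Finset Topology
open scoped Nat

theorem hasSum_sub_succ_of_antitone {f : ℕ → ℝ} {a : ℝ} (hf : Antitone f)
    (ha : Tendsto f atTop (𝓝 a)) : HasSum (fun k => f k - f (k + 1)) (f 0 - a) := by
  rw [hasSum_iff_tendsto_nat_of_nonneg fun k => sub_nonneg.2 (hf k.le_succ)]
  simpa only [sum_range_sub'] using ha.const_sub (f 0)

theorem hasSum_inv_add_sub_inv_add_succ {r : ℝ} (hr : 0 < r) :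
    HasSum (fun k : ℕ => (r + k)⁻¹ - (r + k + 1)⁻¹) r⁻¹ := by
  have hanti : Antitone fun k : ℕ => (r + k)⁻¹ := fun j k hjk => by
    dsimp only
    gcongr
  have hlim : Tendsto (fun k : ℕ => (r + k)⁻¹) atTop (𝓝 0) :=
    tendsto_inv_atTop_zero.comp (tendsto_atTop_add_const_left _ r tendsto_natCast_atTop_atTop)
  simpa [add_assoc] using hasSum_sub_succ_of_antitone hanti hlim

theorem tendsto_inv_add_natCast_pow (z : ℂ) {n : ℕ} (hn : n ≠ 0) :
    Tendsto (fun K : ℕ => ((z + K) ^ n)⁻¹) atTop (𝓝 0) := by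
  have hadd : Tendsto (fun K : ℕ => z + (K : ℂ)) atTop (Bornology.cobounded ℂ) :=
    (tendsto_const_add_cobounded z).comp tendsto_natCast_atTop_cobounded
  simpa [zero_pow hn] using (tendsto_inv₀_cobounded.comp hadd).pow n

/-- The Euler–Maclaurin remainder of order `n` in Stirling's formula, up to sign: the integral of
`bernoulliFun n {t} / (n (z + t) ^ n)` over `t ∈ [0, ∞)`. The series converges absolutely for
`2 ≤ n`. -/
noncomputable def stirlingTail (n : ℕ) (z : ℂ) : ℂ := ∑' k : ℕ, stirlingSegment n (z + k)

/-- Binet's function, the logarithm of the normalized Gamma function which is small at infinity. -/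
noncomputable def binet (z : ℂ) : ℂ := stirlingCoeff 1 * z⁻¹ - stirlingTail 2 z

variable {z : ℂ}

theorem norm_stirlingSegment_add_natCast_le (hz : z ∈ slitPlane) (n k : ℕ) :
    ‖stirlingSegment (n + 2) (z + k)‖ ≤
      (n + 1)! * (Real.cos (arg z / 2))⁻¹ ^ (n + 2) * ‖z‖⁻¹ ^ n *
        ((‖z‖ + k)⁻¹ - (‖z‖ + k + 1)⁻¹) := by
  have hcos := cos_half_arg_pos hz
  have hnorm := norm_pos_iff.2 (slitPlane_ne_zero hz)
  have hray : ∀ t ∈ Set.Icc (0 : ℝ) 1,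
      Real.cos (arg z / 2) * (‖z‖ + k + t) ≤ ‖z + k + t‖ := fun t _ => by
    simpa [add_assoc] using cos_half_arg_mul_norm_add_le z (k + t)
  have hdiff : 0 ≤ (‖z‖ + k)⁻¹ - (‖z‖ + k + 1)⁻¹ :=
    sub_nonneg.2 (inv_anti₀ (by positivity) (by linarith))
  refine (norm_stirlingSegment_add_two_le n hcos (by positivity) hray).trans ?_
  gcongr
  exact le_add_of_nonneg_right k.cast_nonneg

theorem summable_stirlingSegment_add_natCast (hz : z ∈ slitPlane) (n : ℕ) :
    Summable fun k : ℕ => stirlingSegment (n + 2) (z + k) :=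
  .of_norm_bounded
    ((hasSum_inv_add_sub_inv_add_succ (norm_pos_iff.2 (slitPlane_ne_zero hz))).summable.mul_left _)
    (norm_stirlingSegment_add_natCast_le hz n)

theorem norm_stirlingTail_add_two_le (hz : z ∈ slitPlane) (n : ℕ) :
    ‖stirlingTail (n + 2) z‖ ≤
      (n + 1)! * (Real.cos (arg z / 2))⁻¹ ^ (n + 2) * ‖z‖⁻¹ ^ (n + 1) := by
  rw [pow_succ ‖z‖⁻¹, ← mul_assoc]
  exact tsum_of_norm_bounded
    ((hasSum_inv_add_sub_inv_add_succ (norm_pos_iff.2 (slitPlane_ne_zero hz))).mul_left _)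
    (norm_stirlingSegment_add_natCast_le hz n)

theorem sum_stirlingSegment_eq (hz : z ∈ slitPlane) {n : ℕ} (hn : n ≠ 0) (K : ℕ) :
    ∑ k ∈ range K, stirlingSegment n (z + k) =
      stirlingCoeff n * (((z + K) ^ n)⁻¹ - (z ^ n)⁻¹) +
        ∑ k ∈ range K, stirlingSegment (n + 1) (z + k) := by
  have htelescope := sum_range_sub (fun k : ℕ => ((z + k) ^ n)⁻¹) K
  rw [Nat.cast_zero, add_zero] at htelescope
  rw [← htelescope, mul_sum, ← sum_add_distrib]
  refine sum_congr rfl fun k _ => ?_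
  rw [stirlingSegment_eq_add_succ hn (add_natCast_mem_slitPlane hz k), Nat.cast_succ, add_assoc z]

theorem tendsto_sum_stirlingSegment (hz : z ∈ slitPlane) (n : ℕ) :
    Tendsto (fun K => ∑ k ∈ range K, stirlingSegment (n + 1) (z + k)) atTop
      (𝓝 (stirlingTail (n + 2) z - stirlingCoeff (n + 1) * z⁻¹ ^ (n + 1))) := by
  have hboundary := ((tendsto_inv_add_natCast_pow z n.succ_ne_zero).sub_const
    (z ^ (n + 1))⁻¹).const_mul (stirlingCoeff (n + 1) : ℂ)
  have htail := (summable_stirlingSegment_add_natCast hz n).hasSum.tendsto_sum_nat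
  simp only [sum_stirlingSegment_eq hz n.succ_ne_zero]
  convert hboundary.add htail using 2
  rw [stirlingTail, inv_pow]
  ring

theorem stirlingTail_add_two (hz : z ∈ slitPlane) (n : ℕ) :
    stirlingTail (n + 2) z =
      stirlingTail (n + 3) z - stirlingCoeff (n + 2) * z⁻¹ ^ (n + 2) :=
  tendsto_nhds_unique (summable_stirlingSegment_add_natCast hz n).hasSum.tendsto_sum_nat
    (tendsto_sum_stirlingSegment hz (n + 1))

theorem binet_eq_sum_sub_stirlingTail (hz : z ∈ slitPlane) (n : ℕ) :
    binet z = ∑ i ∈ range (n + 2), (stirlingCoeff i : ℂ) * z⁻¹ ^ i - stirlingTail (n + 2) z := by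
  induction n with
  | zero => simp [binet, sum_range_succ, stirlingCoeff]
  | succ n ih =>
    rw [ih, stirlingTail_add_two hz n, sum_range_succ _ (n + 2)]
    ring

theorem norm_binet_sub_sum_succ_le (hz : z ∈ slitPlane) (n : ℕ) :
    ‖binet z - ∑ i ∈ range (n + 1), (stirlingCoeff i : ℂ) * z⁻¹ ^ i‖ ≤
      (1 + (Real.cos (arg z / 2))⁻¹) * (Real.cos (arg z / 2))⁻¹ ^ (n + 1) * (n + 1)! *
        ‖z‖⁻¹ ^ (n + 1) := by
  have hcos : 1 ≤ (Real.cos (arg z / 2))⁻¹ :=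
    (one_le_inv₀ (cos_half_arg_pos hz)).2 (Real.cos_le_one _)
  have hsplit : binet z - ∑ i ∈ range (n + 1), (stirlingCoeff i : ℂ) * z⁻¹ ^ i =
      stirlingCoeff (n + 1) * z⁻¹ ^ (n + 1) - stirlingTail (n + 2) z := by
    rw [binet_eq_sum_sub_stirlingTail hz n, sum_range_succ _ (n + 1)]
    ring
  have hcoeff : ‖(stirlingCoeff (n + 1) : ℂ) * z⁻¹ ^ (n + 1)‖ ≤
      (Real.cos (arg z / 2))⁻¹ ^ (n + 1) * (n + 1)! * ‖z‖⁻¹ ^ (n + 1) := by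
    rw [norm_mul, norm_pow, norm_inv, Complex.norm_ratCast]
    gcongr
    exact (abs_stirlingCoeff_le _).trans
      (le_mul_of_one_le_left (by positivity) (one_le_pow₀ hcos))
  rw [hsplit]
  calc _ ≤ _ := norm_sub_le_of_le hcoeff (norm_stirlingTail_add_two_le hz n)
    _ = _ := by ring

theorem hasGevreyExpansionAt_binet (hz : z ∈ slitPlane) :
    HasGevreyExpansionAt (stirlingSeries.map (algebraMap ℚ ℂ)) (binet z) z⁻¹
      ((1 + (Real.cos (arg z / 2))⁻¹) * (1 + (Real.cos (arg z / 2))⁻¹ * ‖z‖⁻¹))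
      (Real.cos (arg z / 2))⁻¹ := by
  have hcos : 1 ≤ (Real.cos (arg z / 2))⁻¹ :=
    (one_le_inv₀ (cos_half_arg_pos hz)).2 (Real.cos_le_one _)
  have hrem := norm_binet_sub_sum_succ_le hz
  set M := (Real.cos (arg z / 2))⁻¹
  have hL : 1 ≤ (1 + M) * (1 + M * ‖z‖⁻¹) :=
    one_le_mul_of_one_le_of_one_le (by linarith) (le_add_of_nonneg_right (by positivity))
  refine ⟨fun N => ?_, fun N => ?_⟩
  · rw [PowerSeries.coeff_map, stirlingSeries, PowerSeries.coeff_mk, eq_ratCast,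
      Complex.norm_ratCast]
    exact (abs_stirlingCoeff_le N).trans (le_mul_of_one_le_left (by positivity)
      (one_le_mul_of_one_le_of_one_le hL (one_le_pow₀ hcos)))
  · simp only [PowerSeries.coeff_map, stirlingSeries, PowerSeries.coeff_mk, eq_ratCast, norm_inv]
    rcases N with _ | N
    · have hbinet : ‖binet z‖ ≤ (1 + M) * (M * ‖z‖⁻¹) := by
        simpa [stirlingCoeff, mul_assoc] using hrem 0
      simpa using hbinet.trans (by gcongr; linarith)
    · refine (hrem N).trans ?_
      gcongr
      exact le_mul_of_one_le_right (by linarith) (le_add_of_nonneg_right (by positivity))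

end Binet

section NormalizedGamma

open Complex Filter Finset Topology
open scoped Nat

/-- The normalized Gamma function `(2π)^{-1/2} z^{1/2-z} e^z Γ(z)`, with the principal branch of
the power. -/
noncomputable def normalizedGamma (z : ℂ) : ℂ :=
  (√(2 * Real.pi) : ℂ)⁻¹ * exp ((1 / 2 - z) * log z + z) * Gamma z

variable {z : ℂ}

theorem normalizedGamma_eq_exp_mul_add_one (hz : z ∈ slitPlane) :
    normalizedGamma z = exp (-stirlingSegment 1 z) * normalizedGamma (z + 1) := by
  have hz0 := slitPlane_ne_zero hz
  have hexp : exp ((1 / 2 - z) * log z + z) =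
      exp (-stirlingSegment 1 z) * exp ((1 / 2 - (z + 1)) * log (z + 1) + (z + 1)) * z := by
    calc _ = exp (-stirlingSegment 1 z) * exp ((1 / 2 - (z + 1)) * log (z + 1) + (z + 1)) *
          exp (log z) := by
          rw [← exp_add, ← exp_add, stirlingSegment_one hz]
          ring_nf
      _ = _ := by rw [exp_log hz0]
  rw [normalizedGamma, normalizedGamma, Gamma_add_one z hz0, hexp]
  ring

theorem normalizedGamma_eq_exp_sum_mul (hz : z ∈ slitPlane) (K : ℕ) :
    normalizedGamma z =
      exp (-∑ k ∈ range K, stirlingSegment 1 (z + k)) * normalizedGamma (z + K) := by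
  induction K with
  | zero => simp
  | succ K ih =>
    rw [ih, normalizedGamma_eq_exp_mul_add_one (add_natCast_mem_slitPlane hz K),
      sum_range_succ, neg_add, exp_add, mul_assoc, Nat.cast_succ, add_assoc z]

theorem exp_half_sub_mul_log_natCast_add {K : ℕ} (hK : K ≠ 0) :
    exp ((1 / 2 - K) * log K + K) = (√K / (K / Real.exp 1) ^ K : ℝ) := by
  have hK0 : (0 : ℝ) < K := by positivity
  have hreal : Real.exp ((1 / 2 - K) * Real.log K + K) = √K / (K / Real.exp 1) ^ K := by
    rw [Real.sqrt_eq_rpow, Real.rpow_def_of_pos hK0, div_pow, Real.exp_one_pow,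
      ← Real.rpow_natCast (K : ℝ) K, Real.rpow_def_of_pos hK0, ← Real.exp_sub, ← Real.exp_sub]
    ring_nf
  rw [← hreal]
  push_cast
  rfl

theorem normalizedGamma_natCast {K : ℕ} (hK : K ≠ 0) :
    normalizedGamma K = (Stirling.stirlingSeq K / √Real.pi : ℝ) := by
  have hGamma : Gamma K = (K ! / K : ℝ) := by
    obtain ⟨m, rfl⟩ := Nat.exists_eq_succ_of_ne_zero hK
    push_cast
    rw [Gamma_nat_eq_factorial, Nat.factorial_succ]
    push_cast
    field_simp
  rw [normalizedGamma, exp_half_sub_mul_log_natCast_add hK, hGamma, ← ofReal_inv, ← ofReal_mul,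
    ← ofReal_mul, Stirling.stirlingSeq, Real.sqrt_mul zero_le_two, Real.sqrt_mul zero_le_two]
  congr 1
  have hK0 : (0 : ℝ) < K := by positivity
  field_simp
  rw [Real.sq_sqrt hK0.le]

theorem tendsto_normalizedGamma_natCast :
    Tendsto (fun K : ℕ => normalizedGamma K) atTop (𝓝 1) := by
  have hstirling := Stirling.tendsto_stirlingSeq_sqrt_pi.div_const √Real.pi
  rw [div_self (by positivity)] at hstirling
  refine ((continuous_ofReal.tendsto 1).comp hstirling).congr' ?_
  filter_upwards [eventually_ne_atTop 0] with K hK using (normalizedGamma_natCast hK).symm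

theorem Gamma_add_natCast_eq_mul_prod (hz : ∀ k : ℕ, z + k ≠ 0) (K : ℕ) :
    Gamma (z + K) = Gamma z * ∏ j ∈ range K, (z + j) := by
  induction K with
  | zero => simp
  | succ K ih =>
    rw [Nat.cast_succ, ← add_assoc, Gamma_add_one _ (hz K), ih, prod_range_succ]
    ring

theorem Gamma_add_natCast_div_eq (hz : ∀ k : ℕ, z + k ≠ 0) {K : ℕ} (hK : K ≠ 0) :
    Gamma (z + K) / (Gamma K * K ^ z) = Gamma z / GammaSeq z K * (1 + z / K)⁻¹ := by
  have hK0 : (K : ℂ) ≠ 0 := Nat.cast_ne_zero.2 hK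
  have hGamma : Gamma K * K = K ! := by
    obtain ⟨m, rfl⟩ := Nat.exists_eq_succ_of_ne_zero hK
    push_cast
    rw [Gamma_nat_eq_factorial, Nat.factorial_succ, mul_comm]
    push_cast
    rfl
  have hadd : 1 + z / K = (z + K) / K := by field_simp; ring
  rw [Gamma_add_natCast_eq_mul_prod hz, GammaSeq, prod_range_succ, hadd, ← hGamma]
  have := hz K
  field_simp

theorem tendsto_one_add_div_natCast (z : ℂ) :
    Tendsto (fun K : ℕ => 1 + z / K) atTop (𝓝 1) := by
  simpa using (tendsto_const_div_atTop_nhds_zero_nat z).const_add 1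

theorem tendsto_Gamma_add_natCast_div (hz : ∀ k : ℕ, z + k ≠ 0) :
    Tendsto (fun K : ℕ => Gamma (z + K) / (Gamma K * K ^ z)) atTop (𝓝 1) := by
  have hGamma : Gamma z ≠ 0 := Gamma_ne_zero fun m hm => hz m (by rw [hm, neg_add_cancel])
  have hlim := ((tendsto_const_nhds (x := Gamma z)).div (GammaSeq_tendsto_Gamma z) hGamma).mul
    ((tendsto_one_add_div_natCast z).inv₀ one_ne_zero)
  rw [div_self hGamma, inv_one, mul_one] at hlim
  refine hlim.congr' ?_
  filter_upwards [eventually_ne_atTop 0] with K hK using (Gamma_add_natCast_div_eq hz hK).symm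

theorem log_add_natCast {K : ℕ} (hK : K ≠ 0) (hz : z + K ≠ 0) :
    log (z + K) = log K + log (1 + z / K) := by
  have hK0 : (K : ℂ) ≠ 0 := Nat.cast_ne_zero.2 hK
  have hfactor : z + K = (K : ℝ) * (1 + z / K) := by
    push_cast
    field_simp
    ring
  have hne : 1 + z / K ≠ 0 := right_ne_zero_of_mul (hfactor ▸ hz)
  rw [hfactor, log_ofReal_mul (by positivity) hne, natCast_log]

theorem normalizedGamma_add_natCast {K : ℕ} (hK : K ≠ 0) (hz : z + K ≠ 0) :
    normalizedGamma (z + K) = normalizedGamma K * (Gamma (z + K) / (Gamma K * K ^ z)) *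
      exp (z - (K * log (1 + z / K) + (z - 1 / 2) * log (1 + z / K))) := by
  have hK0 : (K : ℂ) ≠ 0 := Nat.cast_ne_zero.2 hK
  have hGamma : Gamma K ≠ 0 := Gamma_ne_zero_of_re_pos (by simpa using hK.bot_lt)
  have hexp : exp ((1 / 2 - (z + K)) * log (z + K) + (z + K)) * K ^ z =
      exp ((1 / 2 - K) * log K + K) *
        exp (z - (K * log (1 + z / K) + (z - 1 / 2) * log (1 + z / K))) := by
    rw [cpow_def_of_ne_zero hK0, ← exp_add, ← exp_add, log_add_natCast hK hz]
    ring_nf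
  have hcpow : (K : ℂ) ^ z ≠ 0 := by simp [cpow_eq_zero_iff, hK0]
  rw [normalizedGamma, normalizedGamma, eq_div_of_mul_eq hcpow hexp]
  field_simp

theorem tendsto_normalizedGamma_add_natCast (hz : ∀ k : ℕ, z + k ≠ 0) :
    Tendsto (fun K : ℕ => normalizedGamma (z + K)) atTop (𝓝 1) := by
  have hmul_log : Tendsto (fun K : ℕ => K * log (1 + z / K)) atTop (𝓝 z) := by
    refine tendsto_nat_mul_log_one_add_of_tendsto (tendsto_const_nhds.congr' ?_)
    filter_upwards [eventually_ne_atTop 0] with K hK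
    rw [mul_div_cancel₀ _ (Nat.cast_ne_zero.2 hK)]
  have hlog : Tendsto (fun K : ℕ => log (1 + z / K)) atTop (𝓝 0) := by
    simpa using (tendsto_one_add_div_natCast z).clog one_mem_slitPlane
  have hexp := (continuous_exp.tendsto _).comp
    ((hmul_log.add (hlog.const_mul (z - 1 / 2))).const_sub z)
  have hlim := (tendsto_normalizedGamma_natCast.mul (tendsto_Gamma_add_natCast_div hz)).mul hexp
  rw [mul_zero, add_zero, sub_self, exp_zero, mul_one, mul_one] at hlim
  refine hlim.congr' ?_
  filter_upwards [eventually_ne_atTop 0] with K hK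
  exact (normalizedGamma_add_natCast hK (hz K)).symm

theorem exp_binet (hz : z ∈ slitPlane) : exp (binet z) = normalizedGamma z := by
  have hne : ∀ k : ℕ, z + k ≠ 0 := fun k => slitPlane_ne_zero (add_natCast_mem_slitPlane hz k)
  have hlim := ((continuous_exp.tendsto _).comp (tendsto_sum_stirlingSegment hz 0).neg).mul
    (tendsto_normalizedGamma_add_natCast hne)
  rw [mul_one, zero_add, zero_add, pow_one, neg_sub, ← binet] at hlim
  exact tendsto_nhds_unique (hlim.congr fun K => (normalizedGamma_eq_exp_sum_mul hz K).symm)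
    tendsto_const_nhds

theorem exists_hasGevreyExpansionAt_normalizedGamma {c β : ℝ} (hc : 0 < c)
    (hβ : β ∈ Set.Ioo 0 Real.pi) :
    ∃ L M : ℝ, 0 < L ∧ 0 < M ∧ ∀ z : ℂ, c < ‖z‖ → |arg z| < β →
      HasGevreyExpansionAt
        (PowerSeries.map (algebraMap ℚ ℂ) ((PowerSeries.exp ℚ).subst stirlingSeries))
        (normalizedGamma z) z⁻¹ L M := by
  have hcos : 0 < Real.cos (β / 2) := Real.cos_pos_of_mem_Ioo
    ⟨by linarith [hβ.1, Real.pi_pos], by linarith [hβ.2]⟩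
  set M := (Real.cos (β / 2))⁻¹
  refine ⟨Real.exp (3 * ((1 + M) * (1 + M * c⁻¹))), M, Real.exp_pos _, by positivity,
    fun z hcz hzβ => ?_⟩
  have hz : z ∈ slitPlane :=
    mem_slitPlane_of_abs_arg_lt_pi (norm_pos_iff.1 (hc.trans hcz)) (hzβ.trans hβ.2)
  have hcosz := cos_half_arg_pos hz
  have hM : (Real.cos (arg z / 2))⁻¹ ≤ M :=
    inv_anti₀ hcos (cos_half_le_cos_half_arg hβ.2.le hzβ.le)
  have hbinet := (hasGevreyExpansionAt_binet hz).mono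
    (L' := (1 + M) * (1 + M * c⁻¹)) (by gcongr) (by positivity) hM
  have hA0 : PowerSeries.constantCoeff (stirlingSeries.map (algebraMap ℚ ℂ)) = 0 := by
    rw [← PowerSeries.coeff_zero_eq_constantCoeff_apply, PowerSeries.coeff_map,
      PowerSeries.coeff_zero_eq_constantCoeff_apply, constantCoeff_stirlingSeries, map_zero]
  have hmap : PowerSeries.map (algebraMap ℚ ℂ) ((PowerSeries.exp ℚ).subst stirlingSeries) =
      (PowerSeries.exp ℂ).subst (stirlingSeries.map (algebraMap ℚ ℂ)) := by
    rw [← PowerSeries.map_exp (algebraMap ℚ ℂ)]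
    exact PowerSeries.map_subst (.of_constantCoeff_zero' constantCoeff_stirlingSeries) _
  rw [hmap, ← exp_binet hz, exp_eq_exp_ℂ]
  exact hbinet.exp hA0 (by positivity)

end NormalizedGamma

/-- The refined Stirling formula: there is a sequence of rationals `(gₙ)` such that
`(2π)^{-1/2}·exp((1/2−z)·Log z + z)·Γ(z)` admits `1 + Σ gₙ z^{-n-1}` as uniform
1-Gevrey asymptotic expansion on every sector `{|z| > c, |arg z| < β}`, `β < π`. -/
theorem stmt_8 :
    ∃ g : ℕ → ℚ, ∀ c : ℝ, 0 < c → ∀ β : ℝ, β ∈ Set.Ioo 0 Real.pi →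
      ∃ L M : ℝ, 0 < L ∧ 0 < M ∧
        ∀ z : ℂ, c < ‖z‖ → |Complex.arg z| < β → ∀ N : ℕ,
          ‖(Real.sqrt (2 * Real.pi) : ℂ)⁻¹ *
              Complex.exp ((1 / 2 - z) * Complex.log z + z) * Complex.Gamma z -
              1 - (∑ n ∈ Finset.range N, (g n : ℂ) / z ^ (n + 1))‖ ≤
            L * M ^ N * (Nat.factorial N : ℝ) * ‖z‖⁻¹ ^ (N + 1) := by
  refine ⟨fun n => PowerSeries.coeff (n + 1) ((PowerSeries.exp ℚ).subst stirlingSeries),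
    fun c hc β hβ => ?_⟩
  obtain ⟨L, M, hL, hM, hGevrey⟩ := exists_hasGevreyExpansionAt_normalizedGamma hc hβ
  refine ⟨L * M, 2 * M, by positivity, by positivity, fun z hcz hzβ N => ?_⟩
  have hconst : PowerSeries.coeff 0 ((PowerSeries.exp ℚ).subst stirlingSeries) = 1 := by
    simpa using coeff_zero_subst constantCoeff_stirlingSeries (PowerSeries.exp ℚ)
  have hbound := (hGevrey z hcz hzβ).norm_sub_sub_sum_succ_le hM.le N
  simpa only [PowerSeries.coeff_map, hconst, map_one, eq_ratCast, inv_pow, ← div_eq_mul_inv,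
    norm_inv, normalizedGamma] using hbound
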